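/- Define erf(x) := (2/√π) ∫₀^x e^{−v²} dv for x ≥ 0. Let t > 0 be real and let α ∈ ℂ with Re(α) < 1. Then ∫₀^∞ (1 − erf(r/(2√t))) r^{−α} dr = t^{(1−α)/2} · Γ(1−α) / Γ((3−α)/2). -/

import Mathlib

open MeasureTheory Real intervalIntegral

/-!
The integral is a Mellin transform of `erfc`, and `erfc` is a multiple of the tail integral
`∫ₓ^∞ exp (-v ^ 2) dv`. By Fubini, the Mellin transform at `s` of `x ↦ ∫ₓ^∞ f` is `s⁻¹` times that
of `f` at `s + 1`. For the Gaussian this gives `Γ((s + 1) / 2) / (√π s)`, which Legendre's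
duplication formula turns into `2 ^ (-s) Γ(s) / Γ(s / 2 + 1)`; rescaling `r` by `2√t` then cancels
the factor `2 ^ (-s)` and produces `t ^ (s / 2)`, with `s = 1 - α`.
-/

section Mellin

variable {E : Type*} [NormedAddCommGroup E] [NormedSpace ℂ E]

lemma aestronglyMeasurable_of_mellinConvergent {f : ℝ → E} {s : ℂ} (hf : MellinConvergent f s) :
    AEStronglyMeasurable f (volume.restrict (Set.Ioi 0)) := by
  have hpow : Measurable fun x : ℝ ↦ (x : ℂ) ^ (1 - s) := by fun_prop
  refine (hpow.aestronglyMeasurable.smul hf.aestronglyMeasurable).congr ?_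
  filter_upwards [ae_restrict_mem measurableSet_Ioi] with x (hx : 0 < x)
  have hx' : (x : ℂ) ≠ 0 := Complex.ofReal_ne_zero.mpr hx.ne'
  simp only [Pi.smul_apply', smul_smul, ← Complex.cpow_add _ _ hx', sub_add_sub_cancel,
    sub_self, Complex.cpow_zero, one_smul]

lemma integral_Ioo_zero_cpow {s : ℂ} (hs : 0 < s.re) {v : ℝ} (hv : 0 ≤ v) :
    ∫ x in Set.Ioo 0 v, (x : ℂ) ^ (s - 1) = (v : ℂ) ^ s / s := by
  have hs0 : s ≠ 0 := by rintro rfl; simp at hs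
  rw [← integral_Ioc_eq_integral_Ioo, ← integral_of_le hv, integral_cpow (Or.inl (by simpa)),
    sub_add_cancel, Complex.ofReal_zero, Complex.zero_cpow hs0, sub_zero]

lemma integral_Ioo_zero_rpow {σ : ℝ} (hσ : 0 < σ) {v : ℝ} (hv : 0 ≤ v) :
    ∫ x in Set.Ioo 0 v, x ^ (σ - 1) = v ^ σ / σ := by
  rw [← integral_Ioc_eq_integral_Ioo, ← integral_of_le hv, integral_rpow (Or.inl (by simpa)),
    sub_add_cancel, Real.zero_rpow hσ.ne', sub_zero]

lemma integrableOn_Ioo_zero_cpow {s : ℂ} (hs : 0 < s.re) (v : ℝ) :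
    IntegrableOn (fun x : ℝ ↦ (x : ℂ) ^ (s - 1)) (Set.Ioo 0 v) := by
  rcases le_or_gt v 0 with hv | hv
  · simp [Set.Ioo_eq_empty_of_le hv]
  · exact ((intervalIntegrable_iff_integrableOn_Ioo_of_le hv.le).1
      (intervalIntegrable_cpow' (by simpa)))

/-- The integrand of the double integral `∫₀^∞ x ^ (s - 1) ∫ₓ^∞ f v dv dx`, extended by zero from
the region `x < v`. -/
noncomputable def mellinTailKernel (f : ℝ → E) (s : ℂ) (x v : ℝ) : E :=
  {p : ℝ × ℝ | p.1 < p.2}.indicator (fun p ↦ (p.1 : ℂ) ^ (s - 1) • f p.2) (x, v)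

lemma mellinTailKernel_eq_indicator_Ioi (f : ℝ → E) (s : ℂ) (x : ℝ) :
    mellinTailKernel f s x = (Set.Ioi x).indicator fun v ↦ (x : ℂ) ^ (s - 1) • f v := rfl

lemma mellinTailKernel_eq_indicator_Iio (f : ℝ → E) (s : ℂ) (v : ℝ) :
    (mellinTailKernel f s · v) = (Set.Iio v).indicator fun x ↦ (x : ℂ) ^ (s - 1) • f v := rfl

lemma setIntegral_mellinTailKernel_right (f : ℝ → E) (s : ℂ) {x : ℝ} (hx : 0 ≤ x) :
    ∫ v in Set.Ioi 0, mellinTailKernel f s x v = (x : ℂ) ^ (s - 1) • ∫ v in Set.Ioi x, f v := by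
  rw [mellinTailKernel_eq_indicator_Ioi, setIntegral_indicator measurableSet_Ioi,
    Set.Ioi_inter_Ioi, max_eq_right hx, MeasureTheory.integral_smul]

lemma setIntegral_mellinTailKernel_left [CompleteSpace E] (f : ℝ → E) {s : ℂ} (hs : 0 < s.re)
    {v : ℝ} (hv : 0 ≤ v) :
    ∫ x in Set.Ioi 0, mellinTailKernel f s x v = ((v : ℂ) ^ s / s) • f v := by
  rw [mellinTailKernel_eq_indicator_Iio, setIntegral_indicator measurableSet_Iio,
    Set.Ioi_inter_Iio, _root_.integral_smul_const, integral_Ioo_zero_cpow hs hv]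

lemma setIntegral_norm_mellinTailKernel_left (f : ℝ → E) {s : ℂ} (hs : 0 < s.re) {v : ℝ}
    (hv : 0 ≤ v) :
    ∫ x in Set.Ioi 0, ‖mellinTailKernel f s x v‖ = v ^ s.re / s.re * ‖f v‖ := by
  have hnorm : (fun x ↦ ‖mellinTailKernel f s x v‖) =
      (Set.Iio v).indicator fun x ↦ ‖(x : ℂ) ^ (s - 1)‖ * ‖f v‖ := by
    ext x
    rw [congrFun (mellinTailKernel_eq_indicator_Iio f s v) x, norm_indicator_eq_indicator_norm]
    simp only [norm_smul]
  rw [hnorm, setIntegral_indicator measurableSet_Iio, Set.Ioi_inter_Iio,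
    MeasureTheory.integral_mul_const, ← integral_Ioo_zero_rpow hs hv]
  congr 1
  refine setIntegral_congr_fun measurableSet_Ioo fun x hx ↦ ?_
  simp only [Complex.norm_cpow_eq_rpow_re_of_pos hx.1, Complex.sub_re, Complex.one_re]

lemma integrable_mellinTailKernel {f : ℝ → E} {s : ℂ} (hs : 0 < s.re)
    (hf : MellinConvergent f (s + 1)) :
    Integrable (Function.uncurry (mellinTailKernel f s))
      ((volume.restrict (Set.Ioi 0)).prod (volume.restrict (Set.Ioi 0))) := by
  have hpow : Measurable fun x : ℝ ↦ (x : ℂ) ^ (s - 1) := by fun_prop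
  have hmeas : AEStronglyMeasurable (Function.uncurry (mellinTailKernel f s))
      ((volume.restrict (Set.Ioi 0)).prod (volume.restrict (Set.Ioi 0))) :=
    (hpow.aestronglyMeasurable.comp_fst.smul
      (aestronglyMeasurable_of_mellinConvergent hf).comp_snd).indicator
      (measurableSet_lt measurable_fst measurable_snd)
  refine (integrable_prod_iff' hmeas).2 ⟨.of_forall fun v ↦ ?_, ?_⟩
  · change IntegrableOn (mellinTailKernel f s · v) (Set.Ioi 0)
    rw [mellinTailKernel_eq_indicator_Iio, integrableOn_indicator_iff measurableSet_Iio,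
      Set.inter_comm, Set.Ioi_inter_Iio]
    exact (integrableOn_Ioo_zero_cpow hs v).smul_const (f v)
  · refine (hf.norm.const_mul s.re⁻¹).congr ?_
    filter_upwards [ae_restrict_mem measurableSet_Ioi] with v (hv : 0 < v)
    simp only [Function.uncurry_apply_pair, setIntegral_norm_mellinTailKernel_left f hs hv.le,
      add_sub_cancel_right, norm_smul, Complex.norm_cpow_eq_rpow_re_of_pos hv]
    ring

theorem hasMellin_integral_Ioi [CompleteSpace E] {f : ℝ → E} {s : ℂ} {m : E} (hs : 0 < s.re)
    (hf : HasMellin f (s + 1) m) :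
    HasMellin (fun x ↦ ∫ v in Set.Ioi x, f v) s (s⁻¹ • m) := by
  have hK := integrable_mellinTailKernel hs hf.1
  constructor
  · refine hK.integral_prod_left.congr ?_
    filter_upwards [ae_restrict_mem measurableSet_Ioi] with x (hx : 0 < x)
    exact setIntegral_mellinTailKernel_right f s hx.le
  calc mellin (fun x ↦ ∫ v in Set.Ioi x, f v) s
      = ∫ x in Set.Ioi 0, ∫ v in Set.Ioi 0, mellinTailKernel f s x v :=
        setIntegral_congr_fun measurableSet_Ioi fun x hx ↦
          (setIntegral_mellinTailKernel_right f s (Set.mem_Ioi.1 hx).le).symm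
    _ = ∫ v in Set.Ioi 0, ∫ x in Set.Ioi 0, mellinTailKernel f s x v :=
        integral_integral_swap hK
    _ = ∫ v in Set.Ioi (0 : ℝ), s⁻¹ • (v : ℂ) ^ (s + 1 - 1) • f v := by
        refine setIntegral_congr_fun measurableSet_Ioi fun v hv ↦ ?_
        simp only [setIntegral_mellinTailKernel_left f hs (Set.mem_Ioi.1 hv).le,
          add_sub_cancel_right, smul_smul, div_eq_inv_mul]
    _ = s⁻¹ • m := by rw [MeasureTheory.integral_smul, ← hf.2, mellin]

lemma hasMellin_comp_div {f : ℝ → E} {s : ℂ} {m : E} {a : ℝ} (ha : 0 < a)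
    (hf : HasMellin f s m) :
    HasMellin (fun x ↦ f (x / a)) s ((a : ℂ) ^ s • m) := by
  simp_rw [div_eq_inv_mul]
  refine ⟨(MellinConvergent.comp_mul_left (inv_pos.2 ha)).2 hf.1, ?_⟩
  rw [mellin_comp_mul_left f s (inv_pos.2 ha), hf.2, Complex.ofReal_inv,
    Complex.inv_cpow_ofReal_nonneg ha.le, Complex.cpow_neg, inv_inv]

end Mellin

lemma hasMellin_exp_neg {s : ℂ} (hs : 0 < s.re) :
    HasMellin (fun x : ℝ ↦ (rexp (-x) : ℂ)) s (Complex.Gamma s) := by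
  constructor
  · simpa only [MellinConvergent, smul_eq_mul, mul_comm] using Complex.GammaIntegral_convergent hs
  · rw [Complex.Gamma_eq_integral hs, Complex.GammaIntegral_eq_mellin]

lemma hasMellin_exp_neg_rpow {p : ℝ} {s : ℂ} (hs : 0 < (s / p).re) :
    HasMellin (fun x : ℝ ↦ (rexp (-x ^ p) : ℂ)) s (|p|⁻¹ • Complex.Gamma (s / p)) := by
  have hp : p ≠ 0 := by rintro rfl; simp at hs
  have hexp := hasMellin_exp_neg hs
  exact ⟨(MellinConvergent.comp_rpow hp).2 hexp.1, by
    rw [← hexp.2]; exact mellin_comp_rpow (fun x : ℝ ↦ (rexp (-x) : ℂ)) s p⟩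

lemma hasMellin_exp_neg_sq {s : ℂ} (hs : 0 < s.re) :
    HasMellin (fun x : ℝ ↦ (rexp (-x ^ 2) : ℂ)) s (Complex.Gamma (s / 2) / 2) := by
  have hs' : 0 < (s / (2 : ℝ)).re := by rw [Complex.div_ofReal_re]; positivity
  have h := hasMellin_exp_neg_rpow hs'
  simpa [Complex.real_smul, div_eq_inv_mul] using h

/-- The complementary error function `1 - erf`, encoded as a normalized Gaussian tail integral so
that its Mellin transform is that of a tail integral. -/
noncomputable def erfc (x : ℝ) : ℝ := 2 / √π * ∫ v in Set.Ioi x, rexp (-v ^ 2)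

lemma erfc_eq_one_sub (x : ℝ) : erfc x = 1 - 2 / √π * ∫ v in (0 : ℝ)..x, rexp (-v ^ 2) := by
  have hint : Integrable fun v : ℝ ↦ rexp (-v ^ 2) := by
    simpa using integrable_exp_neg_mul_sq one_pos
  have hsplit := integral_interval_add_Ioi (a := 0) (b := x) hint.integrableOn hint.integrableOn
  have hgauss : ∫ v in Set.Ioi (0 : ℝ), rexp (-v ^ 2) = √π / 2 := by
    simpa using integral_gaussian_Ioi 1
  have hpi : √π ≠ 0 := by positivity
  rw [erfc, ← sub_eq_of_eq_add' hsplit.symm, hgauss]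
  field_simp

lemma Gamma_add_one_div_two_mul_Gamma_div_two_add_one (s : ℂ) :
    Complex.Gamma ((s + 1) / 2) * Complex.Gamma (s / 2 + 1) =
      Complex.Gamma (s + 1) * 2 ^ (-s) * √π := by
  have h := Complex.Gamma_mul_Gamma_add_half ((s + 1) / 2)
  ring_nf at h ⊢
  exact h

theorem hasMellin_erfc {s : ℂ} (hs : 0 < s.re) :
    HasMellin (fun x ↦ (erfc x : ℂ)) s
      (2 ^ (-s) * Complex.Gamma s / Complex.Gamma (s / 2 + 1)) := by
  have hs0 : s ≠ 0 := by rintro rfl; simp at hs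
  have hpi : (√π : ℂ) ≠ 0 := by simp [Real.pi_ne_zero, Real.pi_pos.le]
  have hΓ : Complex.Gamma (s / 2 + 1) ≠ 0 := Complex.Gamma_ne_zero_of_re_pos <| by
    simp only [Complex.add_re, Complex.div_ofNat_re, Complex.one_re]; positivity
  have hdup := Gamma_add_one_div_two_mul_Gamma_div_two_add_one s
  rw [Complex.Gamma_add_one s hs0] at hdup
  have hvalue : 2 ^ (-s) * Complex.Gamma s / Complex.Gamma (s / 2 + 1) =
      Complex.Gamma ((s + 1) / 2) / (√π * s) :=
    (div_eq_div_iff hΓ (mul_ne_zero hpi hs0)).2 (by linear_combination -hdup)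
  have hgauss : HasMellin (fun x : ℝ ↦ (rexp (-x ^ 2) : ℂ)) (s + 1)
      (Complex.Gamma ((s + 1) / 2) / 2) :=
    hasMellin_exp_neg_sq (by simp only [Complex.add_re, Complex.one_re]; positivity)
  have htail := hasMellin_integral_Ioi hs hgauss
  have herfc := hasMellin_const_smul htail.1 (2 / √π : ℂ)
  rw [htail.2] at herfc
  convert herfc using 1
  · ext x
    simp only [erfc, smul_eq_mul, Complex.ofReal_mul, Complex.ofReal_div, Complex.ofReal_ofNat,
      integral_complex_ofReal]
  · rw [hvalue, smul_eq_mul, smul_eq_mul]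
    field_simp

lemma ofReal_sqrt_cpow {t : ℝ} (ht : 0 ≤ t) (s : ℂ) : ((√t : ℝ) : ℂ) ^ s = (t : ℂ) ^ (s / 2) := by
  have harg : (√t : ℂ).arg = 0 := Complex.arg_ofReal_of_nonneg (sqrt_nonneg t)
  have hsq : (√t : ℂ) ^ 2 = t := by rw [← Complex.ofReal_pow, sq_sqrt ht]
  rw [← hsq, ← Complex.cpow_ofNat_mul' (by simp [harg, pi_pos]) (by simp [harg, pi_pos.le]),
    mul_div_cancel₀ s two_ne_zero]

theorem hasMellin_erfc_div_two_mul_sqrt {t : ℝ} (ht : 0 < t) {s : ℂ} (hs : 0 < s.re) :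
    HasMellin (fun r ↦ (erfc (r / (2 * √t)) : ℂ)) s
      ((t : ℂ) ^ (s / 2) * Complex.Gamma s / Complex.Gamma (s / 2 + 1)) := by
  convert hasMellin_comp_div (by positivity : 0 < 2 * √t) (hasMellin_erfc hs) using 1
  have htwo : (2 : ℂ) ^ s * 2 ^ (-s) = 1 := by
    rw [← Complex.cpow_add _ _ two_ne_zero, add_neg_cancel, Complex.cpow_zero]
  have hscale : ((2 * √t : ℝ) : ℂ) ^ s = 2 ^ s * (t : ℂ) ^ (s / 2) := by
    rw [Complex.ofReal_mul, Complex.mul_cpow_ofReal_nonneg zero_le_two (sqrt_nonneg t),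
      ofReal_sqrt_cpow ht.le, Complex.ofReal_ofNat]
  rw [hscale, smul_eq_mul]
  linear_combination (-(t : ℂ) ^ (s / 2) * Complex.Gamma s / Complex.Gamma (s / 2 + 1)) * htwo

/-- For `t > 0` and `Re α < 1`,
`∫₀^∞ (1 - erf(r/(2√t))) r^{-α} dr = t^{(1-α)/2} Γ(1-α)/Γ((3-α)/2)`. -/
theorem stmt_9 (erf : ℝ → ℝ)
    (herf : ∀ x : ℝ, 0 ≤ x → erf x = (2 / Real.sqrt π) * ∫ v in (0 : ℝ)..x, Real.exp (-v ^ 2))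
    (t : ℝ) (ht : 0 < t) (α : ℂ) (hα : α.re < 1) :
    ∫ r in Set.Ioi (0 : ℝ), ((1 - erf (r / (2 * Real.sqrt t)) : ℝ) : ℂ) * (r : ℂ) ^ (-α) =
      Complex.exp (((1 - α) / 2) * (Real.log t : ℂ)) *
        Complex.Gamma (1 - α) / Complex.Gamma ((3 - α) / 2) := by
  have hs : 0 < (1 - α).re := by simpa using hα
  have herfc (x : ℝ) (hx : 0 ≤ x) : 1 - erf x = erfc x := by rw [herf x hx, erfc_eq_one_sub]
  have hpow : (t : ℂ) ^ ((1 - α) / 2) = Complex.exp ((1 - α) / 2 * (Real.log t : ℂ)) := by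
    rw [Complex.cpow_def_of_ne_zero (Complex.ofReal_ne_zero.mpr ht.ne'),
      ← Complex.ofReal_log ht.le, mul_comm]
  calc ∫ r in Set.Ioi (0 : ℝ), ((1 - erf (r / (2 * √t)) : ℝ) : ℂ) * (r : ℂ) ^ (-α)
      = mellin (fun r ↦ (erfc (r / (2 * √t)) : ℂ)) (1 - α) := by
        refine setIntegral_congr_fun measurableSet_Ioi fun r (hr : 0 < r) ↦ ?_
        simp only [herfc _ (by positivity : 0 ≤ r / (2 * √t)), sub_sub_cancel_left, smul_eq_mul,
          mul_comm]
    _ = (t : ℂ) ^ ((1 - α) / 2) * Complex.Gamma (1 - α) / Complex.Gamma ((1 - α) / 2 + 1) :=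
        (hasMellin_erfc_div_two_mul_sqrt ht hs).2
    _ = _ := by rw [hpow, show (1 - α) / 2 + 1 = (3 - α) / 2 by ring]
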